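/- arXiv:1210.6237 — 3 statements merged into one kernel-verified Lean document; each statement's English description precedes it below -/
import Mathlib

section
/- Suppose F is holomorphic on ℂ₊ and there exist constants B, γ > 0 such that |F(z)| ≤ B for all z ∈ ℂ₊, and for every ε with 0 < ε < γ there exists a constant A_ε > 0 such that |F(t)| ≤ A_ε · exp(−(γ − ε)/t) for all real t with 0 < t ≤ 1. Then |F(z)| ≤ B · exp(−Re(γ/z)) for all z ∈ ℂ₊. -/
open Complex

theorem plh_aux
    (F : ℂ → ℂ) (B γ : ℝ) (hB : 0 < B)
    (hF : DifferentiableOn ℂ F {z : ℂ | 0 < z.re})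
    (hbd : ∀ z : ℂ, 0 < z.re → ‖F z‖ ≤ B)
    (hsmall : ∀ ε : ℝ, 0 < ε → ε < γ → ∃ A : ℝ, 0 < A ∧
      ∀ t : ℝ, 0 < t → t ≤ 1 → ‖F t‖ ≤ A * Real.exp (-(γ - ε) / t))
    (w : ℂ) (δ : ℝ) (hδ : 0 < δ) (hδγ : δ < γ) (hδw : δ < w.re) :
    ‖F w⁻¹‖ ≤ B * Real.exp (-((γ - δ) * (w.re - δ))) := by
  obtain ⟨A, hA, hAt⟩ := hsmall δ hδ hδγ
  have hinv : ∀ v : ℂ, 0 < v.re → 0 < (v⁻¹).re := by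
    intro v hv
    rw [Complex.inv_re]
    have : v ≠ 0 := by rintro rfl; simp at hv
    exact div_pos hv (Complex.normSq_pos.2 this)
  set g : ℂ → ℂ := fun v => F (v + δ)⁻¹ * Complex.exp (((γ - δ : ℝ) : ℂ) * v) with hg
  have hpos : ∀ v : ℂ, 0 ≤ v.re → 0 < (v + δ).re := by
    intro v hv; simp; linarith
  have hgn : ∀ v : ℂ, ‖g v‖ = ‖F (v + δ)⁻¹‖ * Real.exp ((γ - δ) * v.re) := by
    intro v
    rw [hg]; simp only [norm_mul, Complex.norm_exp, Complex.re_ofReal_mul]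
  have hgB : ∀ v : ℂ, 0 ≤ v.re → ‖g v‖ ≤ B * Real.exp ((γ - δ) * v.re) := by
    intro v hv
    rw [hgn]
    gcongr
    exact hbd _ (hinv _ (hpos v hv))
  have hdiff : DifferentiableOn ℂ g (closure {z : ℂ | 0 < z.re}) := by
    intro v hv
    have hv' : 0 ≤ v.re := by
      rw [Complex.closure_setOfPred_lt_re] at hv
      exact hv
    have h1 := hpos v hv'
    have hne : v + δ ≠ 0 := by intro h; rw [h] at h1; simp at h1
    have h2 : DifferentiableAt ℂ F (v + δ)⁻¹ :=
      hF.differentiableAt ((isOpen_lt continuous_const Complex.continuous_re).mem_nhds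
        (hinv _ h1))
    have h3 : DifferentiableAt ℂ (fun v : ℂ => (v + δ)⁻¹) v := by
      fun_prop (disch := assumption)
    have h4 : DifferentiableAt ℂ (fun v : ℂ => F (v + δ)⁻¹) v :=
      DifferentiableAt.comp v h2 h3
    have h5 : DifferentiableAt ℂ (fun v : ℂ => Complex.exp (((γ - δ : ℝ) : ℂ) * v)) v := by
      fun_prop
    exact (h4.mul h5).differentiableWithinAt
  have key : ‖g (w - δ)‖ ≤ B := by
    refine PhragmenLindelof.right_half_plane_of_bounded_on_real hdiff.diffContOnCl
      ⟨1, by norm_num, γ - δ, ?_⟩ ?_ ?_ ?_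
    · refine Asymptotics.IsBigO.of_bound B ?_
      refine Filter.Eventually.filter_mono inf_le_right ?_
      refine Filter.eventually_principal.2 ?_
      intro v (hv : 0 < v.re)
      refine (hgB v hv.le).trans ?_
      rw [Real.norm_eq_abs, Real.abs_exp, Real.rpow_one]
      have : v.re ≤ ‖v‖ := Complex.re_le_norm v
      have : 0 ≤ γ - δ := by linarith
      gcongr
    · refine Filter.isBoundedUnder_of_eventually_le (a := A) ?_
      filter_upwards [Filter.eventually_ge_atTop (1 : ℝ)] with x hx
      rw [hgn]
      have hxp : 0 < x + δ := by linarith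
      have h := hAt (x + δ)⁻¹ (inv_pos.2 hxp) (inv_le_one_of_one_le₀ (by linarith))
      push_cast at h
      rw [div_inv_eq_mul] at h
      calc _ ≤ (A * Real.exp (-(γ - δ) * (x + δ))) * Real.exp ((γ - δ) * (x : ℂ).re) := by
            gcongr
        _ = A * Real.exp (-((γ - δ) * δ)) := by
            rw [mul_assoc, ← Real.exp_add, Complex.ofReal_re]; ring_nf
        _ ≤ A * 1 := by
            gcongr
            refine Real.exp_le_one_iff.2 ?_
            have : 0 ≤ (γ - δ) * δ := mul_nonneg (by linarith) hδ.le
            linarith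
        _ = A := mul_one A
    · intro x
      simpa using hgB (x * I) (by simp)
    · simp; linarith
  rw [hgn, sub_add_cancel] at key
  rw [Real.exp_neg, ← div_eq_mul_inv, le_div_iff₀ (Real.exp_pos _)]
  simpa using key

theorem phragmen_lindelof_halfplane_variant
    (F : ℂ → ℂ) (B γ : ℝ) (hB : 0 < B) (hγ : 0 < γ)
    (hF : DifferentiableOn ℂ F {z : ℂ | 0 < z.re})
    (hbd : ∀ z : ℂ, 0 < z.re → ‖F z‖ ≤ B)
    (hsmall : ∀ ε : ℝ, 0 < ε → ε < γ → ∃ A : ℝ, 0 < A ∧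
      ∀ t : ℝ, 0 < t → t ≤ 1 → ‖F t‖ ≤ A * Real.exp (-(γ - ε) / t)) :
    ∀ z : ℂ, 0 < z.re → ‖F z‖ ≤ B * Real.exp (-((γ : ℂ) / z).re) := by
  intro z hz
  have hw : 0 < (z⁻¹).re := by
    rw [Complex.inv_re]
    have : z ≠ 0 := by rintro rfl; simp at hz
    exact div_pos hz (Complex.normSq_pos.2 this)
  rw [div_eq_mul_inv, Complex.re_ofReal_mul]
  have hlim : Filter.Tendsto (fun δ : ℝ => B * Real.exp (-((γ - δ) * ((z⁻¹).re - δ))))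
      (nhdsWithin 0 (Set.Ioi 0)) (nhds (B * Real.exp (-(γ * (z⁻¹).re)))) := by
    refine Filter.Tendsto.mono_left ?_ nhdsWithin_le_nhds
    exact Continuous.tendsto' (by fun_prop) _ _ (by simp)
  refine ge_of_tendsto hlim ?_
  filter_upwards [Ioo_mem_nhdsGT (lt_min hγ hw)] with δ hδ
  have := plh_aux F B γ hB hF hbd hsmall z⁻¹ δ hδ.1 (hδ.2.trans_le (min_le_left _ _))
    (hδ.2.trans_le (min_le_right _ _))
  rwa [inv_inv] at this
end

section
/- Let (M, ρ) be a metric space and let 0 < β < 1. For any x, y, u ∈ M with ρ(x, u) ≤ ρ(y, u), one has ρ(x, u)^β + ρ(y, u)^β ≥ ρ(x, y)^β + (2 − 2^β) · ρ(x, u)^β. -/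
theorem dist_rpow_inequality
    {M : Type*} [MetricSpace M] (β : ℝ) (hβ0 : 0 < β) (hβ1 : β < 1)
    (x y u : M) (h : dist x u ≤ dist y u) :
    dist x y ^ β + (2 - 2 ^ β) * dist x u ^ β ≤
      dist x u ^ β + dist y u ^ β := by
  have htri : dist x y ≤ dist x u + dist y u := dist_triangle_right x y u
  have h1 : dist x y ^ β ≤ (dist x u + dist y u) ^ β :=
    Real.rpow_le_rpow dist_nonneg htri hβ0.le
  have ha : 0 ≤ dist x u := dist_nonneg
  generalize dist x u = a at *
  generalize dist y u = b at *
  have h2 : (2 * a) ^ β = 2 ^ β * a ^ β := Real.mul_rpow (by norm_num) ha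
  have key : a ^ β + (a + b) ^ β ≤ b ^ β + (2 * a) ^ β := by
    rcases eq_or_lt_of_le (ha.trans h) with hb | hb
    · have : a = 0 := by linarith
      subst this
      simp [← hb]
    · have hc := (Real.concaveOn_rpow hβ0.le hβ1.le).2
      have hA : a ∈ Set.Ici (0:ℝ) := ha
      have hB : a + b ∈ Set.Ici (0:ℝ) := by
        simp only [Set.mem_Ici]; linarith
      have t0 : 0 ≤ a / b := by positivity
      have t1 : 0 ≤ (b - a) / b := div_nonneg (by linarith) hb.le
      have hs : a / b + (b - a) / b = 1 := by field_simp; ring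
      have e1 := hc hA hB t0 t1 hs
      have e2 := hc hA hB t1 t0 (by linarith)
      simp only [smul_eq_mul] at e1 e2
      have p1 : a / b * a + (b - a) / b * (a + b) = b := by field_simp; ring
      have p2 : (b - a) / b * a + a / b * (a + b) = 2 * a := by field_simp; ring
      rw [p1] at e1
      rw [p2] at e2
      have q : (b - a) / b = 1 - a / b := by linarith
      rw [q] at e1 e2
      linarith
  linarith
end

section
/- Let φ : ℝ^d → ℂ be a C^∞ function. Then φ belongs to the Schwartz class 𝒮(ℝ^d) if and only if for all integers m ≥ 0 and ℓ ≥ 0 one has sup_{x∈ℝ^d} (1 + |x|)^ℓ · |Δ^m φ(x)| < ∞, where Δ^m denotes the m-fold iterate of the Laplacian Δ. -/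
open scoped Topology

/-- The Laplacian `Δφ(x) = ∑ i ∂²φ/∂x_i²(x)` on `ℝ^d`. -/
noncomputable def lap (d : ℕ) (φ : EuclideanSpace ℝ (Fin d) → ℂ) :
    EuclideanSpace ℝ (Fin d) → ℂ :=
  fun x => ∑ i : Fin d,
    iteratedFDeriv ℝ 2 φ x (fun _ => EuclideanSpace.single i (1 : ℝ))

section aux
variable {E F : Type*} [NormedAddCommGroup E] [NormedSpace ℝ E]
  [NormedAddCommGroup F] [NormedSpace ℝ F]

/-- Directional derivative. -/
noncomputable def DV (v : E) (f : E → F) : E → F := fun x => fderiv ℝ f x v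

lemma DV_smooth {f : E → F} (hf : ContDiff ℝ (⊤ : ℕ∞) f) (v : E) :
    ContDiff ℝ (⊤ : ℕ∞) (DV v f) :=
  (hf.fderiv_right (m := (⊤ : ℕ∞)) (by simp)).clm_apply contDiff_const

lemma smooth_hasFDerivAt {f : E → F} (hf : ContDiff ℝ (⊤ : ℕ∞) f) (x : E) :
    HasFDerivAt f (fderiv ℝ f x) x :=
  (hf.differentiable (by simp) x).hasFDerivAt

lemma iter_sum {ι : Type*} (u : Finset ι) (f : ι → E → F) (n : ℕ)
    (h : ∀ j ∈ u, ContDiff ℝ n (f j)) (x : E) :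
    iteratedFDeriv ℝ n (fun y => ∑ j ∈ u, f j y) x = ∑ j ∈ u, iteratedFDeriv ℝ n (f j) x := by
  simpa [iteratedFDerivWithin_univ] using
    iteratedFDerivWithin_fun_sum_apply uniqueDiffOn_univ (Set.mem_univ x)
      (fun j hj => (h j hj).contDiffWithinAt)

lemma DV_neg_left (v : E) (f : E → F) : DV (-v) f = - DV v f := by
  ext x; simp [DV]

lemma DV_neg (v : E) (f : E → F) : DV v (-f) = - DV v f := by
  ext x; simp only [DV, fderiv_neg, Pi.neg_apply, neg_apply]

lemma DV_clm_comp {G : Type*} [NormedAddCommGroup G] [NormedSpace ℝ G] (L : F →L[ℝ] G)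
    {f : E → F} (hf : ContDiff ℝ (⊤ : ℕ∞) f) (v : E) :
    DV v (fun x => L (f x)) = fun x => L (DV v f x) := by
  ext x
  have := (L.hasFDerivAt.comp x (smooth_hasFDerivAt hf x)).fderiv
  simp only [DV]
  rw [show (fun x => L (f x)) = L ∘ f from rfl, this]; simp

lemma DV_translate (f : E → F) (v a : E) :
    DV v (fun x => f (a + x)) = fun x => DV v f (a + x) := by
  ext x
  simp only [DV]
  rw [fderiv_comp_add_left]

lemma DV_eq {f : E → F} {x v : E} {f' : E →L[ℝ] F} (h : HasFDerivAt f f' x) : DV v f x = f' v := by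
  simp [DV, h.fderiv]

lemma DV_comm {f : E → F} (hf : ContDiff ℝ (⊤ : ℕ∞) f) (v w : E) :
    DV v (DV w f) = DV w (DV v f) := by
  ext x
  have h2 : HasFDerivAt (fderiv ℝ f) (fderiv ℝ (fderiv ℝ f) x) x :=
    smooth_hasFDerivAt (hf.fderiv_right (m := (⊤ : ℕ∞)) (by simp)) x
  have key : ∀ v w, DV v (DV w f) x = fderiv ℝ (fderiv ℝ f) x v w := by
    intro v w
    have := h2.clm_apply (hasFDerivAt_const w x)
    rw [DV_eq (f := DV w f) this]
    simp
  rw [key, key]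
  exact second_derivative_symmetric (fun y => smooth_hasFDerivAt hf y) h2 v w

lemma DV_two {f : E → F} (hf : ContDiff ℝ (⊤ : ℕ∞) f) (v x : E) :
    iteratedFDeriv ℝ 2 f x (fun _ => v) = DV v (DV v f) x := by
  have h2 : HasFDerivAt (fderiv ℝ f) (fderiv ℝ (fderiv ℝ f) x) x :=
    smooth_hasFDerivAt (hf.fderiv_right (m := (⊤ : ℕ∞)) (by simp)) x
  have := h2.clm_apply (hasFDerivAt_const v x)
  rw [DV_eq (f := DV v f) this, iteratedFDeriv_two_apply]
  simp

lemma line_hasDerivAt {f : E → F} (hf : ContDiff ℝ (⊤ : ℕ∞) f) (x v : E) (t : ℝ) :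
    HasDerivAt (fun t : ℝ => f (x + t • v)) (DV v f (x + t • v)) t := by
  have h1 : HasDerivAt (fun t : ℝ => x + t • v) v t := by
    simpa using ((hasDerivAt_id t).smul_const v).const_add x
  exact (smooth_hasFDerivAt hf (x + t • v)).comp_hasDerivAt t h1

lemma DV_two_nonneg {f : E → ℝ} (hf : ContDiff ℝ (⊤ : ℕ∞) f) {x : E} (v : E)
    (h : IsLocalMin f x) : 0 ≤ DV v (DV v f) x := by
  by_contra! hneg
  set g : ℝ → ℝ := fun t => f (x + t • v) with hg
  have hg1 : deriv g = fun t => DV v f (x + t • v) :=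
    funext fun t => (line_hasDerivAt hf x v t).deriv
  have hg2 : deriv (deriv g) 0 = DV v (DV v f) x := by
    rw [hg1, (line_hasDerivAt (DV_smooth hf v) x v 0).deriv]; simp
  have hcont : Continuous (fun t : ℝ => x + t • v) := by fun_prop
  have hmin : IsLocalMin g 0 := by
    have : Filter.Tendsto (fun t : ℝ => x + t • v) (𝓝 0) (𝓝 x) := by
      simpa using hcont.tendsto 0
    have := this.eventually h
    simpa [IsLocalMin, IsMinFilter, hg] using this
  have hmax : IsLocalMax g 0 := by
    apply isLocalMax_of_deriv_deriv_neg (by rw [hg2]; exact hneg) hmin.deriv_eq_zero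
    exact (hf.continuous.comp hcont).continuousAt
  have hc : g =ᶠ[𝓝 0] fun _ => g 0 := by
    filter_upwards [hmin, hmax] with t h1 h2 using le_antisymm h2 h1
  have : deriv (deriv g) 0 = 0 := by
    rw [hc.deriv.deriv_eq]; simp
  rw [hg2] at this
  linarith

end aux

section real
variable {d : ℕ}

local notation "𝔼" => EuclideanSpace ℝ (Fin d)
local notation "𝐞" => fun i : Fin d => (EuclideanSpace.single i (1 : ℝ) : EuclideanSpace ℝ (Fin d))

/-- Reflection in the `i`-th coordinate. -/
noncomputable def reflC (i : Fin d) : EuclideanSpace ℝ (Fin d) →L[ℝ] EuclideanSpace ℝ (Fin d) :=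
  ContinuousLinearMap.id ℝ _ - (2 : ℝ) •
    (EuclideanSpace.proj i : EuclideanSpace ℝ (Fin d) →L[ℝ] ℝ).smulRight (EuclideanSpace.single i (1 : ℝ))

lemma reflC_apply (i : Fin d) (z : 𝔼) : reflC i z = z - (2 * z i) • EuclideanSpace.single i (1 : ℝ) := by
  simp [reflC, mul_smul]

lemma norm_reflC (i : Fin d) (z : 𝔼) : ‖reflC i z‖ = ‖z‖ := by
  rw [← sq_eq_sq₀ (norm_nonneg _) (norm_nonneg _), reflC_apply, norm_sub_sq_real, norm_smul,
    inner_smul_right]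
  simp [EuclideanSpace.inner_single_right]
  rw [mul_pow, sq_abs]; ring

lemma reflC_single (i j : Fin d) : reflC i (𝐞 j) = 𝐞 j ∨ reflC i (𝐞 j) = - 𝐞 j := by
  by_cases h : i = j
  · right; subst h; simp [reflC_apply, two_smul]
  · left; simp [reflC_apply, h]

lemma barrier_nonneg (i : Fin d) {w : 𝔼 → ℝ} (hw : ContDiff ℝ (⊤ : ℕ∞) w)
    (hlap : ∀ z : 𝔼, ‖z‖ ≤ 1 → ∑ j, DV (𝐞 j) (DV (𝐞 j) w) z < 0)
    (hflat : ∀ z : 𝔼, ‖z‖ ≤ 1 → z i = 0 → 0 ≤ w z)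
    (hsph : ∀ z : 𝔼, ‖z‖ = 1 → 0 ≤ z i → 0 ≤ w z)
    (z : 𝔼) (hz : ‖z‖ ≤ 1) (hzi : 0 ≤ z i) : 0 ≤ w z := by
  have hci : Continuous (fun z : 𝔼 => z i) := by fun_prop
  have hK : IsCompact (Metric.closedBall (0 : 𝔼) 1 ∩ {z | 0 ≤ z i}) :=
    (isCompact_closedBall _ _).inter_right (isClosed_le continuous_const hci)
  obtain ⟨p, ⟨hp1, hp2⟩, hmin⟩ := hK.exists_isMinOn ⟨z, by simpa using hz, hzi⟩ hw.continuous.continuousOn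
  have hp1 : ‖p‖ ≤ 1 := by simpa using hp1
  have hp2 : 0 ≤ p i := hp2
  refine le_trans ?_ (isMinOn_iff.1 hmin z ⟨by simpa using hz, hzi⟩)
  rcases hp1.eq_or_lt with h1 | h1
  · exact hsph p h1 hp2
  rcases hp2.eq_or_lt with h2 | h2
  · exact hflat p hp1 h2.symm
  exfalso
  have hloc : IsLocalMin w p := by
    apply hmin.isLocalMin
    apply Filter.inter_mem
    · exact Metric.closedBall_mem_nhds_of_mem (by simpa using h1)
    · filter_upwards [(isOpen_lt continuous_const hci).mem_nhds h2] with y hy using le_of_lt hy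
  have := Finset.sum_nonneg (s := Finset.univ) fun j _ => DV_two_nonneg hw (𝐞 j) hloc
  linarith [hlap p hp1]

lemma grad_le (i : Fin d) {u : 𝔼 → ℝ} (hu : ContDiff ℝ (⊤ : ℕ∞) u) {M N : ℝ}
    (hM : ∀ z, ‖z‖ ≤ 1 → |u z| ≤ M)
    (hN : ∀ z : 𝔼, ‖z‖ ≤ 1 → |∑ j, DV (𝐞 j) (DV (𝐞 j) u) z| < 2 * N) :
    DV (𝐞 i) u 0 ≤ d * M + N := by
  have hM0 : 0 ≤ M := (abs_nonneg _).trans (hM 0 (by simp))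
  have hN0 : 0 ≤ N := by
    have := (abs_nonneg _).trans_lt (hN 0 (by simp)); linarith
  set L : ℝ := d * M + N with hL
  have hL0 : 0 ≤ L := by positivity
  set w : 𝔼 → ℝ := fun z => M * ‖z‖ ^ 2 + L * (z i - z i ^ 2) - (1 / 2) * (u z - u (reflC i z)) with hwdef
  have hu2 : ContDiff ℝ (⊤ : ℕ∞) (fun z => u (reflC i z)) := hu.comp (reflC i).contDiff
  have hpi : ContDiff ℝ (⊤ : ℕ∞) (fun z : 𝔼 => z i) :=
    (EuclideanSpace.proj i : 𝔼 →L[ℝ] ℝ).contDiff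
  have hw : ContDiff ℝ (⊤ : ℕ∞) w :=
    ((contDiff_const.mul (contDiff_norm_sq ℝ)).add (contDiff_const.mul (hpi.sub (hpi.pow 2)))).sub
      (contDiff_const.mul (hu.sub hu2))
  have hcomp : ∀ {f : 𝔼 → ℝ}, ContDiff ℝ (⊤ : ℕ∞) f → ∀ z,
      HasFDerivAt (fun z => f (reflC i z)) ((fderiv ℝ f (reflC i z)).comp (reflC i)) z :=
    fun hf z => (smooth_hasFDerivAt hf _).comp z (reflC i).hasFDerivAt
  have hprj : ∀ z : 𝔼, HasFDerivAt (fun z : 𝔼 => z i) (EuclideanSpace.proj i : 𝔼 →L[ℝ] ℝ) z :=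
    fun z => (EuclideanSpace.proj i : 𝔼 →L[ℝ] ℝ).hasFDerivAt
  have hD : ∀ v : 𝔼, DV v w = fun z => M * (2 * inner ℝ z v) + L * (v i - 2 * z i * v i)
      - (1 / 2) * (DV v u z - DV (reflC i v) u (reflC i z)) := by
    intro v
    ext z
    have h1 := ((((hasStrictFDerivAt_norm_sq z).hasFDerivAt).const_mul M).add
      (((hprj z).sub ((hprj z).pow 2)).const_mul L)).sub
      (((smooth_hasFDerivAt hu z).sub (hcomp hu z)).const_mul (1 / 2))
    rw [DV_eq (f := w) h1]
    simp [DV]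
  have hDD : ∀ v z : 𝔼, DV v (DV v w) z = M * (2 * inner ℝ v v) - 2 * L * (v i) ^ 2
      - (1 / 2) * (DV v (DV v u) z - DV (reflC i v) (DV (reflC i v) u) (reflC i z)) := by
    intro v z
    rw [hD]
    have hin : HasFDerivAt (fun z : 𝔼 => inner ℝ z v) (innerSL ℝ v) z := by
      have := (innerSL ℝ v).hasFDerivAt (x := z)
      refine this.congr_of_eventuallyEq (Filter.Eventually.of_forall fun y => ?_)
      simp [real_inner_comm]
    have h1 := (((hin.const_mul 2).const_mul M).add
      (((((hprj z).const_mul 2).mul_const (v i)).const_sub (v i)).const_mul L)).sub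
      (((smooth_hasFDerivAt (DV_smooth hu v) z).sub
        (hcomp (DV_smooth hu (reflC i v)) z)).const_mul (1 / 2))
    refine (DV_eq h1).trans ?_
    simp [DV]
    ring
  have hDDr : ∀ j z, DV (reflC i (𝐞 j)) (DV (reflC i (𝐞 j)) u) z = DV (𝐞 j) (DV (𝐞 j) u) z := by
    intro j z
    rcases reflC_single i j with h | h
    · rw [h]
    · rw [h, DV_neg_left, DV_neg_left, DV_neg]; simp
  have hlap : ∀ z : 𝔼, ‖z‖ ≤ 1 → ∑ j, DV (𝐞 j) (DV (𝐞 j) w) z < 0 := by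
    intro z hz
    have e : ∑ j, DV (𝐞 j) (DV (𝐞 j) w) z = 2 * (d * M) - 2 * L
      - (1 / 2) * (∑ j, DV (𝐞 j) (DV (𝐞 j) u) z - ∑ j, DV (𝐞 j) (DV (𝐞 j) u) (reflC i z)) := by
      simp only [hDD, hDDr, Finset.sum_sub_distrib, ← Finset.mul_sum]
      congr 2
      · simp; ring
      · have : ∀ j : Fin d, (EuclideanSpace.single j (1:ℝ) : 𝔼) i ^ 2 = if i = j then 1 else 0 := by
          intro j; by_cases h : i = j <;> simp [h]
        simp only [this]; simp
    have a1 := abs_lt.1 (hN z hz)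
    have a2 := abs_lt.1 (hN (reflC i z) (by rwa [norm_reflC]))
    rw [e, hL]
    linarith [a1.1, a1.2, a2.1, a2.2]
  have hflat : ∀ z : 𝔼, ‖z‖ ≤ 1 → z i = 0 → 0 ≤ w z := by
    intro z hz h0
    have : reflC i z = z := by simp [reflC_apply, h0]
    simp only [hwdef, this, h0]
    have : 0 ≤ M * ‖z‖ ^ 2 := by positivity
    linarith
  have hsph : ∀ z : 𝔼, ‖z‖ = 1 → 0 ≤ z i → 0 ≤ w z := by
    intro z hz h0
    have a1 := abs_le.1 (hM z hz.le)
    have a2 := abs_le.1 (hM (reflC i z) (by rw [norm_reflC, hz]))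
    have h1 : z i ≤ 1 := by
      have := PiLp.norm_apply_le z i
      rw [hz] at this
      exact (le_abs_self _).trans this
    have : 0 ≤ L * (z i - z i ^ 2) := mul_nonneg hL0 (by nlinarith)
    simp only [hwdef, hz]
    linarith [a1.1, a1.2, a2.1, a2.2]
  have hpos := barrier_nonneg i hw hlap hflat hsph
  have hder := line_hasDerivAt hw 0 (𝐞 i) 0
  have hw0 : w 0 = 0 := by simp [hwdef]
  have hge : 0 ≤ DV (𝐞 i) w (0 + (0:ℝ) • 𝐞 i) := by
    have ht := hder.tendsto_slope_zero_right
    refine ge_of_tendsto ht ?_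
    filter_upwards [Ioo_mem_nhdsGT (zero_lt_one (α := ℝ))] with t ht
    have := hpos (t • 𝐞 i) (by simp [norm_smul, abs_of_pos ht.1, ht.2.le]) (by simp [ht.1.le])
    simp only [zero_add, zero_smul, hw0, sub_zero, smul_eq_mul]
    exact mul_nonneg (inv_nonneg.2 ht.1.le) this
  have hre : reflC i (𝐞 i) = - 𝐞 i := by simp [reflC_apply, two_smul]
  rw [hD] at hge
  simp only [hre, DV_neg_left] at hge
  simp at hge
  linarith

lemma abs_grad_le (i : Fin d) {u : 𝔼 → ℝ} (hu : ContDiff ℝ (⊤ : ℕ∞) u) {M N : ℝ}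
    (hM : ∀ z, ‖z‖ ≤ 1 → |u z| ≤ M)
    (hN : ∀ z : 𝔼, ‖z‖ ≤ 1 → |∑ j, DV (𝐞 j) (DV (𝐞 j) u) z| ≤ N) :
    |DV (𝐞 i) u 0| ≤ d * M + N := by
  refine le_of_forall_pos_le_add fun ε hε => ?_
  have hN0 : 0 ≤ N := (abs_nonneg _).trans (hN 0 (by simp))
  have h1 := grad_le i hu (M := M) (N := N + ε) hM
    (fun z hz => (hN z hz).trans_lt (by linarith))
  have h2 := grad_le i hu.neg (M := M) (N := N + ε) (fun z hz => by simpa using hM z hz)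
    (fun z hz => by
      change |∑ j, DV (𝐞 j) (DV (𝐞 j) (-u)) z| < _
      simp only [DV_neg, Pi.neg_apply, Finset.sum_neg_distrib, abs_neg]
      exact (hN z hz).trans_lt (by linarith))
  change DV (𝐞 i) (-u) 0 ≤ _ at h2
  rw [DV_neg, Pi.neg_apply] at h2
  exact abs_le.2 ⟨by linarith, by linarith⟩

lemma lap_eq {φ : 𝔼 → ℂ} (hφ : ContDiff ℝ (⊤ : ℕ∞) φ) :
    lap d φ = fun x => ∑ j, DV (𝐞 j) (DV (𝐞 j) φ) x := by
  ext x
  simp only [lap, DV_two hφ]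

lemma lap_smooth {φ : 𝔼 → ℂ} (hφ : ContDiff ℝ (⊤ : ℕ∞) φ) :
    ContDiff ℝ (⊤ : ℕ∞) (lap d φ) := by
  rw [lap_eq hφ]
  exact ContDiff.sum fun j _ => DV_smooth (DV_smooth hφ _) _

lemma lap_iter_smooth {φ : 𝔼 → ℂ} (hφ : ContDiff ℝ (⊤ : ℕ∞) φ) (m : ℕ) :
    ContDiff ℝ (⊤ : ℕ∞) ((lap d)^[m] φ) := by
  induction m with
  | zero => simpa
  | succ m ih => rw [Function.iterate_succ_apply']; exact lap_smooth ih

lemma DV_lap {φ : 𝔼 → ℂ} (hφ : ContDiff ℝ (⊤ : ℕ∞) φ) (v : 𝔼) :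
    DV v (lap d φ) = lap d (DV v φ) := by
  rw [lap_eq hφ, lap_eq (DV_smooth hφ v)]
  ext x
  have := HasFDerivAt.fun_sum (u := Finset.univ) fun (j : Fin d) _ =>
    smooth_hasFDerivAt (DV_smooth (DV_smooth hφ (𝐞 j)) (𝐞 j)) x
  rw [DV_eq this]
  rw [sum_apply]
  refine Finset.sum_congr rfl fun j _ => ?_
  change DV v (DV (𝐞 j) (DV (𝐞 j) φ)) x = _
  rw [DV_comm (DV_smooth hφ _), DV_comm hφ]

lemma DV_lap_iter {φ : 𝔼 → ℂ} (hφ : ContDiff ℝ (⊤ : ℕ∞) φ) (v : 𝔼) (m : ℕ) :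
    DV v ((lap d)^[m] φ) = (lap d)^[m] (DV v φ) := by
  induction m with
  | zero => rfl
  | succ m ih =>
    rw [Function.iterate_succ_apply', Function.iterate_succ_apply',
      DV_lap (lap_iter_smooth hφ m), ih]

lemma grad_part (T : ℂ →L[ℝ] ℝ) (hT : ∀ c, |T c| ≤ ‖c‖) (i : Fin d) {φ : 𝔼 → ℂ}
    (hφ : ContDiff ℝ (⊤ : ℕ∞) φ) (x : 𝔼) {M N : ℝ}
    (hM : ∀ z, ‖z‖ ≤ 1 → ‖φ (x + z)‖ ≤ M)
    (hN : ∀ z : 𝔼, ‖z‖ ≤ 1 → ‖lap d φ (x + z)‖ ≤ N) :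
    |T (DV (𝐞 i) φ x)| ≤ d * M + N := by
  have hs : ContDiff ℝ (⊤ : ℕ∞) (fun z => T (φ z)) := T.contDiff.comp hφ
  have hu : ContDiff ℝ (⊤ : ℕ∞) (fun z => T (φ (x + z))) :=
    hs.comp (contDiff_const.add contDiff_id)
  have e1 : ∀ v, DV v (fun z => T (φ (x + z))) = fun z => T (DV v φ (x + z)) := by
    intro v
    rw [DV_translate (fun z => T (φ z)), DV_clm_comp T hφ]
  have e2 : ∀ v, DV v (DV v (fun z => T (φ (x + z)))) = fun z => T (DV v (DV v φ) (x + z)) := by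
    intro v
    rw [e1, DV_translate (fun z => T (DV v φ z)), DV_clm_comp T (DV_smooth hφ v)]
  have := abs_grad_le i hu (M := M) (N := N) (fun z hz => (hT _).trans (hM z hz))
    (fun z hz => by
      simp only [e2]
      rw [← map_sum]
      refine (hT _).trans ?_
      have := hN z hz
      rwa [lap_eq hφ] at this)
  simpa [e1] using this

/-- Rapid decay of all iterated Laplacians. -/
def RD (φ : EuclideanSpace ℝ (Fin d) → ℂ) : Prop :=
  ∀ m ℓ : ℕ, ∃ C : ℝ, ∀ x : EuclideanSpace ℝ (Fin d), (1 + ‖x‖) ^ ℓ * ‖(lap d)^[m] φ x‖ ≤ C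

lemma decay_near {f : 𝔼 → ℂ} {ℓ : ℕ} {C : ℝ} (h : ∀ x, (1 + ‖x‖) ^ ℓ * ‖f x‖ ≤ C) (x z : 𝔼)
    (hz : ‖z‖ ≤ 1) : ‖f (x + z)‖ ≤ 2 ^ ℓ * C / (1 + ‖x‖) ^ ℓ := by
  have hx : 1 + ‖x‖ ≤ 2 * (1 + ‖x + z‖) := by
    have : ‖x‖ ≤ ‖x + z‖ + ‖z‖ := by
      simpa using norm_sub_le (x + z) z
    linarith [norm_nonneg (x + z)]
  rw [le_div_iff₀ (by positivity)]
  calc ‖f (x + z)‖ * (1 + ‖x‖) ^ ℓ ≤ ‖f (x + z)‖ * (2 * (1 + ‖x + z‖)) ^ ℓ := by gcongr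
    _ = 2 ^ ℓ * ((1 + ‖x + z‖) ^ ℓ * ‖f (x + z)‖) := by rw [mul_pow]; ring
    _ ≤ _ := by gcongr; exact h _

lemma RD_DV {φ : 𝔼 → ℂ} (hφ : ContDiff ℝ (⊤ : ℕ∞) φ) (h : RD φ) (i : Fin d) :
    RD (DV (𝐞 i) φ) := by
  intro m ℓ
  obtain ⟨C1, h1⟩ := h m ℓ
  obtain ⟨C2, h2⟩ := h (m + 1) ℓ
  rw [Function.iterate_succ_apply'] at h2
  refine ⟨2 * (d * (2 ^ ℓ * C1) + 2 ^ ℓ * C2), fun x => ?_⟩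
  rw [← DV_lap_iter hφ]
  have hs := lap_iter_smooth hφ m
  have a1 := grad_part Complex.reCLM Complex.abs_re_le_norm i hs x
    (decay_near h1 x) (decay_near h2 x)
  have a2 := grad_part Complex.imCLM Complex.abs_im_le_norm i hs x
    (decay_near h1 x) (decay_near h2 x)
  have a3 := Complex.norm_le_abs_re_add_abs_im (DV (𝐞 i) ((lap d)^[m] φ) x)
  simp only [Complex.reCLM_apply, Complex.imCLM_apply] at a1 a2
  have hp : 0 < (1 + ‖x‖) ^ ℓ := by positivity
  calc _ ≤ (1 + ‖x‖) ^ ℓ * (2 * (d * (2 ^ ℓ * C1 / (1 + ‖x‖) ^ ℓ) + 2 ^ ℓ * C2 / (1 + ‖x‖) ^ ℓ)) := by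
        gcongr; linarith
    _ = _ := by field_simp

lemma fderiv_eq_sum (φ : 𝔼 → ℂ) :
    fderiv ℝ φ = fun x => ∑ i : Fin d,
      ContinuousLinearMap.smulRightL ℝ 𝔼 ℂ (EuclideanSpace.proj i : 𝔼 →L[ℝ] ℝ) (DV (𝐞 i) φ x) := by
  ext x v
  rw [sum_apply]
  conv_lhs => rw [← (EuclideanSpace.basisFun (Fin d) ℝ).sum_repr v]
  simp [DV]

lemma RD_decay (n : ℕ) : ∀ {φ : 𝔼 → ℂ}, ContDiff ℝ (⊤ : ℕ∞) φ → RD φ → ∀ k : ℕ,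
    ∃ C : ℝ, ∀ x, ‖x‖ ^ k * ‖iteratedFDeriv ℝ n φ x‖ ≤ C := by
  induction n with
  | zero =>
    intro φ hφ h k
    obtain ⟨C, hC⟩ := h 0 k
    refine ⟨C, fun x => le_trans ?_ (hC x)⟩
    rw [norm_iteratedFDeriv_zero, Function.iterate_zero, id]
    gcongr
    linarith
  | succ n ih =>
    intro φ hφ h k
    choose C hC using fun i => ih (DV_smooth hφ (𝐞 i)) (RD_DV hφ h i) k
    let L : Fin d → ℂ →L[ℝ] (𝔼 →L[ℝ] ℂ) := fun i =>
      ContinuousLinearMap.smulRightL ℝ 𝔼 ℂ (EuclideanSpace.proj i : 𝔼 →L[ℝ] ℝ)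
    refine ⟨∑ i, ‖L i‖ * C i, fun x => ?_⟩
    rw [← norm_iteratedFDeriv_fderiv, fderiv_eq_sum]
    have hsum : iteratedFDeriv ℝ n (fun x => ∑ i, L i (DV (𝐞 i) φ x)) x
        = ∑ i, iteratedFDeriv ℝ n (L i ∘ (DV (𝐞 i) φ)) x := by
      exact iter_sum Finset.univ (fun i : Fin d => L i ∘ (DV (𝐞 i) φ)) n
        (fun i _ => ((L i).contDiff.comp (DV_smooth hφ (𝐞 i))).of_le (by exact_mod_cast le_top)) x
    change ‖x‖ ^ k * ‖iteratedFDeriv ℝ n (fun x => ∑ i, L i (DV (𝐞 i) φ x)) x‖ ≤ _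
    rw [hsum]
    calc _ ≤ ‖x‖ ^ k * ∑ i, ‖iteratedFDeriv ℝ n (L i ∘ (DV (𝐞 i) φ)) x‖ := by
          gcongr; exact norm_sum_le _ _
      _ = ∑ i, ‖x‖ ^ k * ‖iteratedFDeriv ℝ n (L i ∘ (DV (𝐞 i) φ)) x‖ := Finset.mul_sum _ _ _
      _ ≤ _ := by
          refine Finset.sum_le_sum fun i _ => ?_
          have := (L i).norm_iteratedFDeriv_comp_left (n := n) (x := x)
            (DV_smooth hφ (𝐞 i)).contDiffAt (by exact_mod_cast le_top)
          calc _ ≤ ‖x‖ ^ k * (‖L i‖ * ‖iteratedFDeriv ℝ n (DV (𝐞 i) φ) x‖) := by gcongr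
            _ = ‖L i‖ * (‖x‖ ^ k * ‖iteratedFDeriv ℝ n (DV (𝐞 i) φ) x‖) := by ring
            _ ≤ _ := by gcongr; exact hC i x

lemma schwartz_lap (ψ : SchwartzMap 𝔼 ℂ) : ∃ ψ' : SchwartzMap 𝔼 ℂ, ⇑ψ' = lap d ψ := by
  refine ⟨Laplacian.laplacian ψ, ?_⟩
  ext x
  rw [SchwartzMap.laplacian_apply,
    InnerProductSpace.laplacian_eq_iteratedFDeriv_orthonormalBasis _ (EuclideanSpace.basisFun (Fin d) ℝ)]
  simp only [lap]
  refine Finset.sum_congr rfl fun i _ => ?_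
  congr 1
  ext j : 1
  fin_cases j <;> simp

lemma schwartz_lap_iter (ψ : SchwartzMap 𝔼 ℂ) (m : ℕ) :
    ∃ ψ' : SchwartzMap 𝔼 ℂ, ⇑ψ' = (lap d)^[m] ψ := by
  induction m with
  | zero => exact ⟨ψ, rfl⟩
  | succ m ih =>
    obtain ⟨ψ', h⟩ := ih
    rw [Function.iterate_succ_apply', ← h]
    exact schwartz_lap ψ'

end real

theorem schwartz_iff_laplacian_decay
    (d : ℕ) (φ : EuclideanSpace ℝ (Fin d) → ℂ)
    (hφ : ContDiff ℝ (⊤ : ℕ∞) φ) :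
    (∃ ψ : SchwartzMap (EuclideanSpace ℝ (Fin d)) ℂ, ⇑ψ = φ) ↔
      (∀ m ℓ : ℕ, ∃ C : ℝ,
        ∀ x : EuclideanSpace ℝ (Fin d),
          (1 + ‖x‖) ^ ℓ * ‖(lap d)^[m] φ x‖ ≤ C) := by
  constructor
  · rintro ⟨ψ, rfl⟩ m ℓ
    obtain ⟨ψ', h⟩ := schwartz_lap_iter ψ m
    rw [← h]
    refine ⟨2 ^ ℓ * (Finset.Iic (ℓ, 0)).sup
      (fun m => SchwartzMap.seminorm ℝ m.1 m.2) ψ', fun x => ?_⟩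
    have := SchwartzMap.one_add_le_sup_seminorm_apply (𝕜 := ℝ) (m := (ℓ, 0)) (le_refl ℓ)
      (le_refl 0) ψ' x
    rw [norm_iteratedFDeriv_zero] at this
    exact this
  · intro h
    exact ⟨⟨φ, hφ, fun k n => RD_decay n hφ h k⟩, rfl⟩
end
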